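/- There is no Katětov assignment for the class of good colored orders. -/

import Mathlib

/-!
A Katětov assignment `K` has a point `t ∈ K(∅)`, because it realizes the one-point extension of
the empty structure. Pushing `t` forward along `∅ → X` gives a point `t_X ∈ K(X)` that is preserved
by every `K(f)`. Let `k` be the color of the pair `t_P, η_P(p)` for a one-point structure `P = {p}`.
By naturality along `P → X`, the point `t_X` has color `k` to every `η_X(x)`, whatever `X` is.
If `X` consists of two points joined by color `k`, their images under `η_X` together with `t_X`
form a monochromatic triangle in `K(X)`. The degenerate case `t_P = η_P(p)` is impossible as well,
since then `t_X` would be the `η_X`-image of both points of `X`.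
-/

/-- A colored order structure on a type `X`: a strict linear order `lt` together with a
symmetric coloring `c` of pairs of distinct elements by natural numbers. -/
structure ColOrd (X : Type) where
  lt : X → X → Prop
  c : X → X → ℕ
  lt_irrefl : ∀ a, ¬ lt a a
  lt_trans : ∀ ⦃a b d⦄, lt a b → lt b d → lt a d
  lt_total : ∀ a b, a ≠ b → lt a b ∨ lt b a
  c_symm : ∀ a b, a ≠ b → c a b = c b a

/-- A colored order is *good* if it contains no monochromatic triangle. -/
def ColOrd.Good {X : Type} (S : ColOrd X) : Prop :=
  ¬ ∃ a b d : X, a ≠ b ∧ b ≠ d ∧ a ≠ d ∧ S.c a b = S.c b d ∧ S.c a b = S.c a d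

/-- An embedding of colored orders: a strictly order-preserving injection which
preserves the colors of pairs of distinct elements. -/
def IsEmb {X Y : Type} (S : ColOrd X) (T : ColOrd Y) (f : X → Y) : Prop :=
  Function.Injective f ∧
  (∀ a b, S.lt a b ↔ T.lt (f a) (f b)) ∧
  (∀ a b, a ≠ b → T.c (f a) (f b) = S.c a b)

/-- An automorphism is a surjective self-embedding. -/
def IsAuto {X : Type} (S : ColOrd X) (α : X → X) : Prop :=
  Function.Surjective α ∧ IsEmb S S α

/-- `B`, a colored order on `Option A` (where `some a` represents the point `a ∈ A` and
`none` represents a new point), extends the structure induced by `S` on `A ⊆ X`. -/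
def ExtendsOn {X : Type} (S : ColOrd X) (A : Set X) (B : ColOrd (Option A)) : Prop :=
  (∀ a b : A, B.lt (some a) (some b) ↔ S.lt a b) ∧
  (∀ a b : A, (a : X) ≠ (b : X) → B.c (some a) (some b) = S.c a b)

/-- The one-point extension property: every good one-point extension of (the structure
induced on) a finite subset `A` is realized by some `t ∉ A`, in the sense that the map
fixing `A` pointwise and sending the new point to `t` is an isomorphism onto `A ∪ {t}`. -/
def OnePointExtProp {X : Type} (S : ColOrd X) : Prop :=
  ∀ A : Set X, A.Finite → ∀ B : ColOrd (Option A), B.Good → ExtendsOn S A B →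
    ∃ t : X, t ∉ A ∧
      (∀ a : A, (B.lt (some a) none ↔ S.lt a t) ∧ (B.lt none (some a) ↔ S.lt t a)) ∧
      (∀ a : A, B.c (some a) none = S.c a t ∧ B.c none (some a) = S.c t a)

/-- Ultrahomogeneity: every isomorphism between finite subsets (with the induced
structure) extends to an automorphism. -/
def Ultrahomogeneous {X : Type} (S : ColOrd X) : Prop :=
  ∀ (A B : Set X), A.Finite → B.Finite → ∀ g : A → B, Function.Bijective g →
    (∀ a b : A, S.lt (g a : X) (g b : X) ↔ S.lt a b) →
    (∀ a b : A, (a : X) ≠ (b : X) → S.c (g a : X) (g b : X) = S.c a b) →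
    ∃ α : X → X, IsAuto S α ∧ ∀ a : A, α a = g a

/-- A Fraïssé limit of the class of finite good colored orders: a countably infinite
good colored order which is ultrahomogeneous and has the one-point extension property. -/
def IsFLim {X : Type} (S : ColOrd X) : Prop :=
  Countable X ∧ Infinite X ∧ S.Good ∧ Ultrahomogeneous S ∧ OnePointExtProp S

/-- A Katětov assignment for the class of good colored orders: a functorial assignment
`X ↦ K(X)` on countable good colored orders together with natural embeddings
`η_X : X → K(X)` such that every good one-point extension of a finite subset of `X`
is realized in `K(X)` over `η_X`. -/
structure KatetovAssignment where
  /-- the carrier of `K(X)` -/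
  Carrier : ∀ (X : Type) (S : ColOrd X), Countable X → S.Good → Type
  /-- the colored-order structure of `K(X)` -/
  str : ∀ (X : Type) (S : ColOrd X) (hc : Countable X) (hg : S.Good),
    ColOrd (Carrier X S hc hg)
  countable : ∀ X S hc hg, Countable (Carrier X S hc hg)
  good : ∀ X S hc hg, (str X S hc hg).Good
  /-- the natural embedding `η_X : X → K(X)` -/
  eta : ∀ X S hc hg, X → Carrier X S hc hg
  eta_emb : ∀ X S hc hg, IsEmb S (str X S hc hg) (eta X S hc hg)
  /-- the action `K(f)` on embeddings -/
  map : ∀ (X Y : Type) (SX : ColOrd X) (SY : ColOrd Y)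
    (hcX : Countable X) (hgX : SX.Good) (hcY : Countable Y) (hgY : SY.Good)
    (f : X → Y), IsEmb SX SY f → Carrier X SX hcX hgX → Carrier Y SY hcY hgY
  map_emb : ∀ X Y SX SY hcX hgX hcY hgY (f : X → Y) (hf : IsEmb SX SY f),
    IsEmb (str X SX hcX hgX) (str Y SY hcY hgY) (map X Y SX SY hcX hgX hcY hgY f hf)
  map_id : ∀ X S hc hg (h : IsEmb S S id),
    map X X S S hc hg hc hg id h = id
  map_comp : ∀ (X Y Z : Type) (SX : ColOrd X) (SY : ColOrd Y) (SZ : ColOrd Z)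
    (hcX : Countable X) (hgX : SX.Good) (hcY : Countable Y) (hgY : SY.Good)
    (hcZ : Countable Z) (hgZ : SZ.Good)
    (f : X → Y) (g : Y → Z) (hf : IsEmb SX SY f) (hg : IsEmb SY SZ g)
    (hgf : IsEmb SX SZ (g ∘ f)),
    map X Z SX SZ hcX hgX hcZ hgZ (g ∘ f) hgf =
      map Y Z SY SZ hcY hgY hcZ hgZ g hg ∘ map X Y SX SY hcX hgX hcY hgY f hf
  naturality : ∀ X Y SX SY hcX hgX hcY hgY (f : X → Y) (hf : IsEmb SX SY f),
    map X Y SX SY hcX hgX hcY hgY f hf ∘ eta X SX hcX hgX = eta Y SY hcY hgY ∘ f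
  realizes : ∀ X S hc hg (A : Set X), A.Finite →
    ∀ B : ColOrd (Option A), B.Good → ExtendsOn S A B →
      ∃ t : Carrier X S hc hg,
        IsEmb B (str X S hc hg)
          (fun o => Option.elim o t (fun a => eta X S hc hg a))

/-- The colored order on a type with at most one element; the value `0` of the coloring carries no
information, since there are no pairs. -/
def ColOrd.ofSubsingleton (X : Type) [Subsingleton X] : ColOrd X where
  lt _ _ := False
  c _ _ := 0
  lt_irrefl _ h := h
  lt_trans _ _ _ h _ := h
  lt_total a b h := (h (Subsingleton.elim a b)).elim
  c_symm _ _ _ := rfl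

/-- The colored order with two points `false < true`, joined by color `k`. -/
def ColOrd.edge (k : ℕ) : ColOrd Bool where
  lt a b := a < b
  c _ _ := k
  lt_irrefl a := _root_.lt_irrefl a
  lt_trans _ _ _ h h' := _root_.lt_trans h h'
  lt_total _ _ h := lt_or_gt_of_ne h
  c_symm _ _ _ := rfl

lemma ColOrd.ofSubsingleton_good (X : Type) [Subsingleton X] :
    (ColOrd.ofSubsingleton X).Good := by
  rintro ⟨a, b, _, h, _⟩
  exact h (Subsingleton.elim a b)

lemma ColOrd.edge_good (k : ℕ) : (ColOrd.edge k).Good := by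
  rintro ⟨a, b, d, hab, hbd, had, -⟩
  revert a b d
  decide

/-- Any map out of a structure with at most one point is an embedding. -/
lemma isEmb_ofSubsingleton {X Y : Type} [Subsingleton X] (T : ColOrd Y) (f : X → Y) :
    IsEmb (ColOrd.ofSubsingleton X) T f := by
  refine ⟨fun a b _ => Subsingleton.elim a b, fun a b => ?_,
    fun a b h => (h (Subsingleton.elim a b)).elim⟩
  rw [Subsingleton.elim a b]
  exact ⟨False.elim, T.lt_irrefl _⟩

/-- There is no Katětov assignment for the class of good colored
orders. -/
theorem no_katetov_assignment : IsEmpty KatetovAssignment := by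
  refine ⟨fun K => ?_⟩
  have gE := ColOrd.ofSubsingleton_good Empty
  have gP := ColOrd.ofSubsingleton_good Unit
  have hE : Countable Empty := inferInstance
  have hP : Countable Unit := inferInstance
  have hB : Countable Bool := inferInstance
  obtain ⟨t, -⟩ := K.realizes Empty (ColOrd.ofSubsingleton Empty) hE gE ∅ Set.finite_empty
    (ColOrd.ofSubsingleton _) (ColOrd.ofSubsingleton_good _)
    ⟨fun a => a.1.elim, fun a => a.1.elim⟩
  let s := K.map _ _ _ _ hE gE hP gP Empty.elim (isEmb_ofSubsingleton _ _) t
  let p := K.eta Unit _ hP gP ()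
  let k := (K.str _ _ hP gP).c s p
  have gB := ColOrd.edge_good k
  let u := K.map _ _ _ _ hE gE hB gB Empty.elim (isEmb_ofSubsingleton _ _) t
  let e := K.eta Bool _ hB gB
  -- `F j` is `K` applied to the inclusion of the one-point structure at `j`.
  let F := fun j : Bool =>
    K.map Unit Bool _ _ hP gP hB gB (fun _ => j) (isEmb_ofSubsingleton _ _)
  have hF : ∀ j, IsEmb _ _ (F j) := fun j => K.map_emb _ _ _ _ _ _ _ _ _ _
  have hFs : ∀ j, F j s = u := by
    intro j
    have hu : ∀ g (hg : IsEmb _ (ColOrd.edge k) g), K.map _ _ _ _ hE gE hB gB g hg t = u := by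
      intro g hg
      obtain rfl : g = Empty.elim := funext fun x => x.elim
      rfl
    rw [← hu _ (isEmb_ofSubsingleton _ ((fun _ : Unit => j) ∘ Empty.elim))]
    exact (congrFun (K.map_comp _ _ _ _ _ (ColOrd.edge k) hE gE hP gP hB gB Empty.elim
      (fun _ : Unit => j) (isEmb_ofSubsingleton _ _) (isEmb_ofSubsingleton _ _) _) t).symm
  have hFp : ∀ j, F j p = e j := fun j =>
    congrFun (K.naturality _ _ _ _ hP gP hB gB (fun _ : Unit => j) (isEmb_ofSubsingleton _ _)) ()
  have he : IsEmb (ColOrd.edge k) _ e := K.eta_emb _ _ _ _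
  have hne : e false ≠ e true := fun h => Bool.false_ne_true (he.1 h)
  have hsp : s ≠ p := by
    intro h
    apply hne
    rw [← hFp, ← hFp, ← h, hFs, hFs]
  have hue : ∀ j, u ≠ e j := by
    intro j h
    rw [← hFs j, ← hFp j] at h
    exact hsp ((hF j).1 h)
  have hc : ∀ j, (K.str _ _ hB gB).c u (e j) = k := by
    intro j
    have := (hF j).2.2 s p hsp
    rwa [hFs, hFp] at this
  have hcc : (K.str _ _ hB gB).c (e false) (e true) = k := he.2.2 _ _ Bool.false_ne_true
  exact K.good _ _ hB gB ⟨u, e false, e true, hue _, hne, hue _,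
    (hc _).trans hcc.symm, (hc _).trans (hc _).symm⟩
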